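/- Fix 0 < q < 1, 0 < a < q^{−1}, b < q^{−1} and c ∈ ℝ ∖ {0}, and set γ = (1+abq²) − (acq + bq/c). Let h_n = ((abq²;q)_∞/(aq;q)_∞)·((1−abq)(aq)^n/(1−abq^{2n+1}))·((q;q)_n (bq;q)_n)/((aq;q)_n (abq;q)_n) (so h_n > 0), and set φ_n(x) = p_n(x;a,b;q)/√(h_n), φ_{−1} := 0. Then for every n ∈ ℕ and every x ≠ 0: aq(bqx−1)(φ_n(qx) − φ_n(x)) + (x−1)(φ_n(q^{−1}x) − φ_n(x)) + γ x φ_n(x) = a_n^γ φ_{n+1}(x) + b_n^γ φ_n(x) + a_{n−1}^γ φ_{n−1}(x), where a_{−1}^γ := 0, a_n^γ = −(√(aq)·(1−acq^{n+1})(1−bq^{n+1}/c)/(1−abq^{2n+2}))·√((1−q^{n+1})(1−aq^{n+1})(1−bq^{n+1})(1−abq^{n+1})/((1−abq^{2n+1})(1−abq^{2n+3}))), and b_n^γ = (1−acq^{n+1})(1−aq^{n+1})(1−abq^{n+1})(1−bq^{n+1}/c)/((1−abq^{2n+1})(1−abq^{2n+2})) + aq(1−q^n)(1−acq^n)(1−bq^n)(1−bq^n/c)/((1−abq^{2n})(1−abq^{2n+1})).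 -/

import Mathlib

/-- q-shifted factorial `(a;q)_k = ∏_{j=0}^{k-1} (1 - a q^j)`. -/
noncomputable def qPoch (q a : ℝ) (k : ℕ) : ℝ := ∏ j ∈ Finset.range k, (1 - a * q ^ j)

/-- Infinite q-shifted factorial `(a;q)_∞ = ∏_{j=0}^{∞} (1 - a q^j)`. -/
noncomputable def qPochInf (q a : ℝ) : ℝ := ∏' j : ℕ, (1 - a * q ^ j)

/-- Little q-Jacobi polynomial
`p_n(x;a,b;q) = ∑_{k=0}^{n} ((q^{−n};q)_k (abq^{n+1};q)_k)/((aq;q)_k (q;q)_k) (qx)^k`. -/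
noncomputable def littleqJacobi (q a b : ℝ) (n : ℕ) (x : ℝ) : ℝ :=
  ∑ k ∈ Finset.range (n + 1),
    qPoch q (q ^ (-(n : ℤ))) k * qPoch q (a * b * q ^ (n + 1)) k /
      (qPoch q (a * q) k * qPoch q q k) * (q * x) ^ k

/-! The operator `T^γ` is bidiagonal times diagonal times bidiagonal. The connection formula expands
`p_n(·;a,b)` in `p_n(·;aq,b)` and `p_{n-1}(·;aq,b)`; on these `L^{(aq,b)} + γ` is diagonal, with
eigenvalue `q^{-n}(1 - acq^{n+1})(1 - bq^{n+1}/c)` for the given `γ`; and multiplication by `x`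
turns `p_n(·;aq,b)` into a multiple of the difference `p_n(·;a,b) - p_{n+1}(·;a,b)`. The two
connection coefficients `G_n` and `H_n` satisfy `G_n h_{n+1} = H_{n+1} h_n`, so the tridiagonal
matrix obtained becomes symmetric in the orthonormal basis. -/

section QPochhammer

variable {q : ℝ}

lemma qPoch_zero (q a : ℝ) : qPoch q a 0 = 1 := by simp only [qPoch, Finset.prod_range_zero]

lemma qPoch_succ (q a : ℝ) (k : ℕ) : qPoch q a (k + 1) = qPoch q a k * (1 - a * q ^ k) :=
  Finset.prod_range_succ _ _

lemma qPoch_succ_left (q a : ℝ) (k : ℕ) : qPoch q a (k + 1) = (1 - a) * qPoch q (a * q) k := by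
  rw [qPoch, Finset.prod_range_succ', mul_comm]
  simp only [qPoch, pow_zero, mul_one, pow_succ', mul_assoc]

lemma qPoch_mul_ne_zero {t : ℝ} (ht : ∀ k, 1 - t * q ^ (k + 1) ≠ 0) (k : ℕ) :
    qPoch q (t * q) k ≠ 0 :=
  Finset.prod_ne_zero_iff.mpr fun j _ ↦ by simpa only [pow_succ', mul_assoc] using ht j

lemma qPoch_mul_sq_ne_zero {t : ℝ} (ht : ∀ k, 1 - t * q ^ (k + 1) ≠ 0) (k : ℕ) :
    qPoch q (t * q ^ 2) k ≠ 0 :=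
  Finset.prod_ne_zero_iff.mpr fun j _ ↦ by
    simpa only [mul_assoc, ← pow_add, add_comm 2] using ht (j + 1)

lemma qPoch_self_ne_zero (hq : ∀ k, 1 - q ^ (k + 1) ≠ 0) (k : ℕ) : qPoch q q k ≠ 0 :=
  Finset.prod_ne_zero_iff.mpr fun j _ ↦ by simpa only [pow_succ'] using hq j

lemma qPoch_zpow_neg_eq_zero (hq : q ≠ 0) (n : ℕ) : qPoch q (q ^ (-(n : ℤ))) (n + 1) = 0 := by
  rw [qPoch_succ, zpow_neg, zpow_natCast, inv_mul_cancel₀ (pow_ne_zero n hq), sub_self, mul_zero]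

lemma qPoch_zpow_neg_succ (hq : q ≠ 0) (n k : ℕ) :
    qPoch q (q ^ (-((n + 1 : ℕ) : ℤ))) (k + 1)
      = (1 - q ^ (-((n + 1 : ℕ) : ℤ))) * qPoch q (q ^ (-(n : ℤ))) k := by
  rw [qPoch_succ_left, ← zpow_add_one₀ hq]
  congr 3
  push_cast
  ring

lemma one_sub_mul_pow_succ_pos {t : ℝ} (hq : 0 ≤ q) (hq1 : q ≤ 1) (ht : t * q < 1) (k : ℕ) :
    0 < 1 - t * q ^ (k + 1) := by
  have hk0 : 0 ≤ q ^ k := pow_nonneg hq k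
  have hk1 : q ^ k ≤ 1 := pow_le_one₀ hq hq1
  rw [pow_succ', ← mul_assoc]
  rcases le_total (t * q) 0 with h | h <;> nlinarith

lemma qPochInf_pos {a : ℝ} (hq : |q| < 1) (ha : ∀ j, 0 < 1 - a * q ^ j) : 0 < qPochInf q a := by
  have hlog : Summable fun j : ℕ ↦ Real.log (1 - a * q ^ j) := by
    simpa only [sub_eq_add_neg] using Real.summable_log_one_add_of_summable
      ((summable_geometric_of_abs_lt_one hq).mul_left a).neg
  rw [qPochInf, ← Real.rexp_tsum_eq_tprod ha hlog]
  exact Real.exp_pos _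

end QPochhammer

section Coefficients

variable {q a b : ℝ}

/-- The coefficient of `x ^ k` in the little q-Jacobi polynomial `p_n(x;a,b;q)`. -/
noncomputable def littleqJacobiCoeff (q a b : ℝ) (n k : ℕ) : ℝ :=
  qPoch q (q ^ (-(n : ℤ))) k * qPoch q (a * b * q ^ (n + 1)) k
    / (qPoch q (a * q) k * qPoch q q k) * q ^ k

lemma littleqJacobiCoeff_zero_right (q a b : ℝ) (n : ℕ) : littleqJacobiCoeff q a b n 0 = 1 := by
  simp only [littleqJacobiCoeff, qPoch_zero, pow_zero, mul_one, div_one]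

lemma littleqJacobiCoeff_succ_self (hq : q ≠ 0) (n : ℕ) :
    littleqJacobiCoeff q a b n (n + 1) = 0 := by
  rw [littleqJacobiCoeff, qPoch_zpow_neg_eq_zero hq, zero_mul, zero_div, zero_mul]

lemma littleqJacobi_eq_sum (q a b : ℝ) (n : ℕ) (x : ℝ) :
    littleqJacobi q a b n x
      = ∑ k ∈ Finset.range (n + 1), littleqJacobiCoeff q a b n k * x ^ k := by
  simp only [littleqJacobi, littleqJacobiCoeff, mul_pow, mul_assoc]

lemma littleqJacobi_eq_sum_range_add_two (hq : q ≠ 0) (n : ℕ) (x : ℝ) :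
    littleqJacobi q a b n x
      = ∑ k ∈ Finset.range (n + 2), littleqJacobiCoeff q a b n k * x ^ k := by
  rw [Finset.sum_range_succ, littleqJacobiCoeff_succ_self hq, zero_mul, add_zero,
    littleqJacobi_eq_sum]

lemma littleqJacobi_zero (q a b x : ℝ) : littleqJacobi q a b 0 x = 1 := by
  rw [littleqJacobi_eq_sum, Finset.sum_range_one, littleqJacobiCoeff_zero_right, pow_zero, mul_one]

lemma littleqJacobiCoeff_succ_right (hq : q ≠ 0) (hqk : ∀ k, 1 - q ^ (k + 1) ≠ 0)
    (ha : ∀ k, 1 - a * q ^ (k + 1) ≠ 0) (n k : ℕ) :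
    (q ^ (-((k + 1 : ℕ) : ℤ)) - 1) * (1 - a * q ^ (k + 1)) * littleqJacobiCoeff q a b n (k + 1)
      = (q ^ (-(k : ℤ)) - q ^ (-(n : ℤ))) * (1 - a * b * q ^ (n + k + 1))
        * littleqJacobiCoeff q a b n k := by
  have hqk' := hqk k
  have hak : 1 - q ^ (k + 1) * a ≠ 0 := by simpa only [mul_comm] using ha k
  have hz := qPoch_self_ne_zero hqk k
  have hw := qPoch_mul_ne_zero ha k
  simp only [littleqJacobiCoeff, qPoch_succ, zpow_neg, zpow_natCast]
  rw [mul_assoc a q, ← pow_succ']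
  field_simp
  ring

lemma littleqJacobiCoeff_sub_succ (hq : q ≠ 0) (hqk : ∀ k, 1 - q ^ (k + 1) ≠ 0)
    (ha : ∀ k, 1 - a * q ^ (k + 1) ≠ 0) (n k : ℕ) :
    littleqJacobiCoeff q a b n (k + 1) - littleqJacobiCoeff q a b (n + 1) (k + 1)
      = (1 - a * b * q ^ (2 * n + 2)) / ((1 - a * q) * q ^ n)
        * littleqJacobiCoeff q (a * q) b n k := by
  have hq' : 1 - q ^ (k + 1) ≠ 0 := hqk k
  have ha' : 1 - a * q ≠ 0 := by simpa using ha 0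
  have hz := qPoch_self_ne_zero hqk k
  have hpoch : qPoch q (a * b * q ^ (n + 1)) (k + 1)
      = (1 - a * b * q ^ (n + 1)) * qPoch q (a * q * b * q ^ (n + 1)) k := by
    rw [qPoch_succ_left]
    ring_nf
  have hpochSucc : qPoch q (a * b * q ^ (n + 1 + 1)) (k + 1)
      = qPoch q (a * q * b * q ^ (n + 1)) k * (1 - a * q * b * q ^ (n + 1) * q ^ k) := by
    rw [← qPoch_succ]
    ring_nf
  simp only [littleqJacobiCoeff, qPoch_zpow_neg_succ hq, hpoch, hpochSucc,
    qPoch_succ_left q (a * q), qPoch_succ q q, qPoch_succ q (q ^ (-(n : ℤ))), ← pow_succ']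
  simp only [zpow_neg, zpow_natCast]
  field_simp
  ring

lemma littleqJacobiCoeff_connection (hq : q ≠ 0) (hqk : ∀ k, 1 - q ^ (k + 1) ≠ 0)
    (ha : ∀ k, 1 - a * q ^ (k + 1) ≠ 0) (n k : ℕ) :
    (1 - a * q) * (1 - a * b * q ^ (2 * n + 3)) * littleqJacobiCoeff q a b (n + 1) k
      = (1 - a * q ^ (n + 2)) * (1 - a * b * q ^ (n + 2)) * littleqJacobiCoeff q (a * q) b (n + 1) k
        - a * q * (1 - q ^ (n + 1)) * (1 - b * q ^ (n + 1))
          * littleqJacobiCoeff q (a * q) b n k := by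
  cases k with
  | zero =>
    simp only [littleqJacobiCoeff_zero_right]
    ring
  | succ k =>
    have ha1 : 1 - a * q ≠ 0 := by simpa using ha 0
    have hak : 1 - a * q ^ 2 * q ^ k ≠ 0 := by
      simpa only [mul_assoc, ← pow_add, add_comm 2] using ha (k + 1)
    have hw := qPoch_mul_sq_ne_zero ha k
    have hz := qPoch_self_ne_zero hqk (k + 1)
    have hpoch : qPoch q (a * b * q ^ (n + 1 + 1)) (k + 1)
        = (1 - a * b * q ^ (n + 2)) * qPoch q (a * b * q ^ (n + 3)) k := by
      rw [qPoch_succ_left]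
      ring_nf
    have hpochDiag : qPoch q (a * q * b * q ^ (n + 1 + 1)) (k + 1)
        = qPoch q (a * b * q ^ (n + 3)) k * (1 - a * b * q ^ (n + 3) * q ^ k) := by
      rw [← qPoch_succ]
      ring_nf
    have hpochSub : qPoch q (a * q * b * q ^ (n + 1)) (k + 1)
        = (1 - a * b * q ^ (n + 2)) * qPoch q (a * b * q ^ (n + 3)) k := by
      rw [← hpoch]
      ring_nf
    simp only [littleqJacobiCoeff, qPoch_zpow_neg_succ hq, hpoch, hpochDiag, hpochSub,
      qPoch_succ_left q (a * q), mul_assoc a q q, ← pow_two, qPoch_succ q (a * q ^ 2),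
      qPoch_succ q (q ^ (-(n : ℤ)))]
    simp only [zpow_neg, zpow_natCast]
    field_simp
    ring

end Coefficients

section Polynomials

variable {q a b : ℝ}

lemma littleqJacobi_sub_succ (hq : q ≠ 0) (hqk : ∀ k, 1 - q ^ (k + 1) ≠ 0)
    (ha : ∀ k, 1 - a * q ^ (k + 1) ≠ 0) (n : ℕ) (x : ℝ) :
    littleqJacobi q a b n x - littleqJacobi q a b (n + 1) x
      = (1 - a * b * q ^ (2 * n + 2)) / ((1 - a * q) * q ^ n)
        * (x * littleqJacobi q (a * q) b n x) := by
  rw [littleqJacobi_eq_sum_range_add_two hq, littleqJacobi_eq_sum q a b (n + 1),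
    littleqJacobi_eq_sum, ← Finset.sum_sub_distrib, Finset.sum_range_succ', Finset.mul_sum,
    Finset.mul_sum]
  simp only [littleqJacobiCoeff_zero_right, sub_self, add_zero]
  refine Finset.sum_congr rfl fun k _ ↦ ?_
  rw [← sub_mul, littleqJacobiCoeff_sub_succ hq hqk ha]
  ring

/-- The coefficient of `p_n(·;aq,b)` in the expansion of `(1 - aq) p_n(·;a,b)`. -/
noncomputable def littleqJacobiConnDiag (q a b : ℝ) (n : ℕ) : ℝ :=
  (1 - a * q ^ (n + 1)) * (1 - a * b * q ^ (n + 1)) / (1 - a * b * q ^ (2 * n + 1))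

/-- Minus the coefficient of `p_{n-1}(·;aq,b)` in the expansion of `(1 - aq) p_n(·;a,b)`. It is
zero at `n = 0`, where `n - 1` truncates. -/
noncomputable def littleqJacobiConnSub (q a b : ℝ) (n : ℕ) : ℝ :=
  a * q * (1 - q ^ n) * (1 - b * q ^ n) / (1 - a * b * q ^ (2 * n + 1))

lemma littleqJacobiConnSub_zero (q a b : ℝ) : littleqJacobiConnSub q a b 0 = 0 := by
  rw [littleqJacobiConnSub, pow_zero, sub_self, mul_zero, zero_mul, zero_div]

lemma littleqJacobi_connection (hq : q ≠ 0) (hqk : ∀ k, 1 - q ^ (k + 1) ≠ 0)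
    (ha : ∀ k, 1 - a * q ^ (k + 1) ≠ 0) (hab : ∀ k, 1 - a * b * q ^ (k + 1) ≠ 0) (n : ℕ) (x : ℝ) :
    (1 - a * q) * littleqJacobi q a b n x
      = littleqJacobiConnDiag q a b n * littleqJacobi q (a * q) b n x
        - littleqJacobiConnSub q a b n * littleqJacobi q (a * q) b (n - 1) x := by
  cases n with
  | zero =>
    simp only [littleqJacobi_zero, littleqJacobiConnSub_zero, littleqJacobiConnDiag, mul_div_assoc,
      mul_zero, div_self (hab 0)]
    ring
  | succ n =>
    have hn := hab (2 * (n + 1))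
    rw [Nat.add_sub_cancel, littleqJacobiConnDiag, littleqJacobiConnSub,
      littleqJacobi_eq_sum_range_add_two hq n, littleqJacobi_eq_sum, littleqJacobi_eq_sum]
    simp only [Finset.mul_sum, ← Finset.sum_sub_distrib]
    refine Finset.sum_congr rfl fun k _ ↦ ?_
    have hk := littleqJacobiCoeff_connection (b := b) hq hqk ha n k
    field_simp
    linear_combination x ^ k * hk

end Polynomials

section Operator

variable {q a b : ℝ}

/-- The second-order `q`-difference operator `L^{(a,b)}` whose eigenfunctions are the little
q-Jacobi polynomials `p_n(·;a,b;q)`, acting on all real functions (it is meaningful away from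
`x = 0` only). -/
noncomputable def littleqJacobiOp (q a b : ℝ) : (ℝ → ℝ) →ₗ[ℝ] ℝ → ℝ where
  toFun f x := a * (b * q - x⁻¹) * (f (q * x) - f x) + (1 - x⁻¹) * (f (x / q) - f x)
  map_add' f g := by
    ext x
    simp only [Pi.add_apply]
    ring
  map_smul' r f := by
    ext x
    simp only [Pi.smul_apply, smul_eq_mul, RingHom.id_apply]
    ring

/-- The eigenvalue of `L^{(a,b)}` on `p_n(·;a,b;q)`. -/
noncomputable def littleqJacobiEigenvalue (q a b : ℝ) (n : ℕ) : ℝ :=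
  (q ^ (-(n : ℤ)) - 1) * (1 - a * b * q ^ (n + 1))

lemma littleqJacobiOp_apply (f : ℝ → ℝ) (x : ℝ) :
    littleqJacobiOp q a b f x
      = a * (b * q - x⁻¹) * (f (q * x) - f x) + (1 - x⁻¹) * (f (x / q) - f x) := rfl

lemma littleqJacobiOp_pow (hq : q ≠ 0) (k : ℕ) (x : ℝ) :
    littleqJacobiOp q a b (fun y ↦ y ^ k) x
      = littleqJacobiEigenvalue q a b k * x ^ k
        - (q ^ (-(k : ℤ)) - 1) * (1 - a * q ^ k) * (x ^ k * x⁻¹) := by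
  simp only [littleqJacobiOp_apply, littleqJacobiEigenvalue, mul_pow, div_pow, zpow_neg,
    zpow_natCast]
  field_simp
  ring

lemma littleqJacobiOp_littleqJacobi (hq : q ≠ 0) (hqk : ∀ k, 1 - q ^ (k + 1) ≠ 0)
    (ha : ∀ k, 1 - a * q ^ (k + 1) ≠ 0) (n : ℕ) {x : ℝ} (hx : x ≠ 0) :
    littleqJacobiOp q a b (littleqJacobi q a b n) x
      = littleqJacobiEigenvalue q a b n * littleqJacobi q a b n x := by
  have hp : littleqJacobi q a b n
      = ∑ k ∈ Finset.range (n + 2), littleqJacobiCoeff q a b n k • fun y : ℝ ↦ y ^ k := by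
    ext y
    simp only [littleqJacobi_eq_sum_range_add_two hq, Finset.sum_apply, Pi.smul_apply, smul_eq_mul]
  have hlower : ∑ k ∈ Finset.range (n + 2), littleqJacobiCoeff q a b n k
        * ((q ^ (-(k : ℤ)) - 1) * (1 - a * q ^ k) * (x ^ k * x⁻¹))
      = ∑ k ∈ Finset.range (n + 1), (q ^ (-(k : ℤ)) - q ^ (-(n : ℤ)))
          * (1 - a * b * q ^ (n + k + 1)) * littleqJacobiCoeff q a b n k * x ^ k := by
    rw [Finset.sum_range_succ']
    simp only [← littleqJacobiCoeff_succ_right hq hqk ha, Nat.cast_zero, neg_zero, zpow_zero,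
      sub_self, zero_mul, mul_zero, add_zero]
    refine Finset.sum_congr rfl fun k _ ↦ ?_
    rw [pow_succ x, mul_inv_cancel_right₀ hx]
    ring
  rw [hp, map_sum, Finset.sum_apply, ← hp]
  simp only [map_smul, Pi.smul_apply, smul_eq_mul, littleqJacobiOp_pow hq,
    mul_sub (littleqJacobiCoeff q a b n _), Finset.sum_sub_distrib]
  rw [hlower, Finset.sum_range_succ, littleqJacobiCoeff_succ_self hq, zero_mul, add_zero,
    ← Finset.sum_sub_distrib, littleqJacobi_eq_sum, Finset.mul_sum]
  refine Finset.sum_congr rfl fun k _ ↦ ?_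
  simp only [littleqJacobiEigenvalue, zpow_neg, zpow_natCast]
  field_simp
  ring

/-- The operator `T^γ = x (L^{(aq,b)} + γ)`. -/
noncomputable def littleqJacobiT (q a b γ : ℝ) : (ℝ → ℝ) →ₗ[ℝ] ℝ → ℝ :=
  LinearMap.mulLeft ℝ (fun x ↦ x) ∘ₗ (littleqJacobiOp q (a * q) b + γ • LinearMap.id)

lemma littleqJacobiT_apply (γ : ℝ) (f : ℝ → ℝ) (x : ℝ) :
    littleqJacobiT q a b γ f x = x * (littleqJacobiOp q (a * q) b f x + γ * f x) := rfl

/-- The constant `γ` for which the eigenvalues of `L^{(aq,b)} + γ` factor. -/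
noncomputable def littleqJacobiGamma (q a b c : ℝ) : ℝ :=
  (1 + a * b * q ^ 2) - (a * c * q + b * q / c)

/-- The factor by which `T^γ` maps `p_{n-1}(·;aq,b)` to
`(1 - aq) (p_{n-1}(·;a,b) - p_n(·;a,b))`. -/
noncomputable def littleqJacobiTFactor (q a b c : ℝ) (n : ℕ) : ℝ :=
  (1 - a * c * q ^ n) * (1 - b * q ^ n / c) / (1 - a * b * q ^ (2 * n))

lemma littleqJacobiEigenvalue_add_gamma {c : ℝ} (hq : q ≠ 0) (hc : c ≠ 0) (n : ℕ) :
    littleqJacobiEigenvalue q (a * q) b n + littleqJacobiGamma q a b c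
      = (1 - a * c * q ^ (n + 1)) * (1 - b * q ^ (n + 1) / c) / q ^ n := by
  simp only [littleqJacobiEigenvalue, littleqJacobiGamma, zpow_neg, zpow_natCast]
  field_simp
  ring

lemma littleqJacobiT_littleqJacobi_shift {c : ℝ} (hq : q ≠ 0) (hqk : ∀ k, 1 - q ^ (k + 1) ≠ 0)
    (ha : ∀ k, 1 - a * q ^ (k + 1) ≠ 0) (hab : ∀ k, 1 - a * b * q ^ (k + 1) ≠ 0) (hc : c ≠ 0)
    (n : ℕ) {x : ℝ} (hx : x ≠ 0) :
    littleqJacobiT q a b (littleqJacobiGamma q a b c) (littleqJacobi q (a * q) b n) x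
      = (1 - a * q) * littleqJacobiTFactor q a b c (n + 1)
        * (littleqJacobi q a b n x - littleqJacobi q a b (n + 1) x) := by
  have ha1 : 1 - a * q ≠ 0 := by simpa only [zero_add, pow_one] using ha 0
  have haq (k : ℕ) : 1 - a * q * q ^ (k + 1) ≠ 0 := by
    simpa only [pow_succ', mul_assoc] using ha (k + 1)
  have hab' : 1 - a * b * q ^ (2 * (n + 1)) ≠ 0 := hab (2 * n + 1)
  rw [littleqJacobiT_apply, littleqJacobiOp_littleqJacobi hq hqk haq n hx, ← add_mul,
    littleqJacobiEigenvalue_add_gamma hq hc, littleqJacobi_sub_succ hq hqk ha,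
    littleqJacobiTFactor]
  field_simp
  simp only [mul_add, mul_one]

theorem littleqJacobiT_littleqJacobi {c : ℝ} (hq : q ≠ 0) (hqk : ∀ k, 1 - q ^ (k + 1) ≠ 0)
    (ha : ∀ k, 1 - a * q ^ (k + 1) ≠ 0) (hab : ∀ k, 1 - a * b * q ^ (k + 1) ≠ 0) (hc : c ≠ 0)
    (n : ℕ) {x : ℝ} (hx : x ≠ 0) :
    littleqJacobiT q a b (littleqJacobiGamma q a b c) (littleqJacobi q a b n) x
      = littleqJacobiConnDiag q a b n * littleqJacobiTFactor q a b c (n + 1)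
          * (littleqJacobi q a b n x - littleqJacobi q a b (n + 1) x)
        + littleqJacobiConnSub q a b n * littleqJacobiTFactor q a b c n
          * (littleqJacobi q a b n x - littleqJacobi q a b (n - 1) x) := by
  have ha1 : 1 - a * q ≠ 0 := by simpa only [zero_add, pow_one] using ha 0
  have hshift (m : ℕ) := littleqJacobiT_littleqJacobi_shift hq hqk ha hab hc m hx
  have hconn : (1 - a * q) • littleqJacobi q a b n
      = littleqJacobiConnDiag q a b n • littleqJacobi q (a * q) b n
        - littleqJacobiConnSub q a b n • littleqJacobi q (a * q) b (n - 1) :=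
    funext (littleqJacobi_connection hq hqk ha hab n)
  have hT := congrFun (congrArg (littleqJacobiT q a b (littleqJacobiGamma q a b c)) hconn) x
  simp only [map_sub, map_smul, Pi.sub_apply, Pi.smul_apply, smul_eq_mul, hshift] at hT
  refine mul_left_cancel₀ ha1 (hT.trans ?_)
  cases n with
  | zero =>
    rw [littleqJacobiConnSub_zero]
    ring
  | succ n =>
    rw [Nat.add_sub_cancel]
    ring

end Operator

section Norm

variable {q a b : ℝ}

/-- The squared norm `h_n` of `p_n(·;a,b;q)`. -/
noncomputable def littleqJacobiNormSq (q a b : ℝ) (n : ℕ) : ℝ :=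
  qPochInf q (a * b * q ^ 2) / qPochInf q (a * q)
    * ((1 - a * b * q) * (a * q) ^ n / (1 - a * b * q ^ (2 * n + 1)))
    * (qPoch q q n * qPoch q (b * q) n) / (qPoch q (a * q) n * qPoch q (a * b * q) n)

lemma littleqJacobiConn_balance (ha : ∀ k, 1 - a * q ^ (k + 1) ≠ 0)
    (hab : ∀ k, 1 - a * b * q ^ (k + 1) ≠ 0) (n : ℕ) :
    littleqJacobiConnDiag q a b n * littleqJacobiNormSq q a b (n + 1)
      = littleqJacobiConnSub q a b (n + 1) * littleqJacobiNormSq q a b n := by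
  have h1 := ha n
  have h2 : 1 - a * q ^ (n + 1) * b ≠ 0 := by simpa only [mul_right_comm] using hab n
  have h3 := hab (2 * n)
  have h4 : 1 - a * b * q ^ (2 * (n + 1) + 1) ≠ 0 := hab (2 * (n + 1))
  have hw := qPoch_mul_ne_zero ha n
  have hz := qPoch_mul_ne_zero hab n
  simp only [littleqJacobiConnDiag, littleqJacobiConnSub, littleqJacobiNormSq, qPoch_succ,
    mul_assoc _ q (q ^ n), ← pow_succ']
  field_simp
  ring

lemma one_sub_mul_mul_pow_add_two_pos (hq : 0 < q) (hq1 : q ≤ 1) (ha : 0 < a) (ha1 : a * q < 1)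
    (hb : b * q < 1) (k : ℕ) : 0 < 1 - a * b * q ^ (k + 2) := by
  have h : a * b * q * q < 1 := by nlinarith [mul_pos ha hq]
  simpa only [pow_succ', mul_assoc] using one_sub_mul_pow_succ_pos hq.le hq1 h k

lemma one_sub_mul_mul_pow_succ_ne_zero (hq : 0 < q) (hq1 : q ≤ 1) (ha : 0 < a) (ha1 : a * q < 1)
    (hb : b * q < 1) (hab : a * b * q ≠ 1) (k : ℕ) : 1 - a * b * q ^ (k + 1) ≠ 0 := by
  cases k with
  | zero => simpa only [zero_add, pow_one] using sub_ne_zero.mpr hab.symm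
  | succ k => exact (one_sub_mul_mul_pow_add_two_pos hq hq1 ha ha1 hb k).ne'

lemma littleqJacobiConnDiag_pos (hq : 0 < q) (hq1 : q ≤ 1) (ha : 0 < a) (ha1 : a * q < 1)
    (hb : b * q < 1) (hab : a * b * q ≠ 1) (n : ℕ) : 0 < littleqJacobiConnDiag q a b n := by
  have han := one_sub_mul_pow_succ_pos hq.le hq1 ha1 n
  have hpos := one_sub_mul_mul_pow_add_two_pos hq hq1 ha ha1 hb
  rw [littleqJacobiConnDiag, mul_div_assoc]
  refine mul_pos han ?_
  cases n with
  | zero =>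
    rw [mul_zero, div_self (one_sub_mul_mul_pow_succ_ne_zero hq hq1 ha ha1 hb hab 0)]
    exact one_pos
  | succ n => exact div_pos (hpos n) (hpos (2 * n + 1))

lemma littleqJacobiConnSub_succ_pos (hq : 0 < q) (hq1 : q < 1) (ha : 0 < a) (ha1 : a * q < 1)
    (hb : b * q < 1) (n : ℕ) : 0 < littleqJacobiConnSub q a b (n + 1) := by
  have hqn : 0 < 1 - q ^ (n + 1) := sub_pos.mpr (pow_lt_one₀ hq.le hq1 n.succ_ne_zero)
  have hbn := one_sub_mul_pow_succ_pos hq.le hq1.le hb n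
  have habn := one_sub_mul_mul_pow_add_two_pos hq hq1.le ha ha1 hb (2 * n + 1)
  exact div_pos (by positivity) habn

lemma littleqJacobiNormSq_pos (hq : 0 < q) (hq1 : q < 1) (ha : 0 < a) (ha1 : a * q < 1)
    (hb : b * q < 1) (hab : a * b * q ≠ 1) (n : ℕ) : 0 < littleqJacobiNormSq q a b n := by
  have hapos := one_sub_mul_pow_succ_pos hq.le hq1.le ha1
  have habne := one_sub_mul_mul_pow_succ_ne_zero hq hq1.le ha ha1 hb hab
  induction n with
  | zero =>
    have hqabs : |q| < 1 := by rwa [abs_of_pos hq]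
    have hnum : 0 < qPochInf q (a * b * q ^ 2) := qPochInf_pos hqabs fun j ↦ by
      simpa only [mul_assoc, ← pow_add, add_comm 2] using
        one_sub_mul_mul_pow_add_two_pos hq hq1.le ha ha1 hb j
    have hden : 0 < qPochInf q (a * q) := qPochInf_pos hqabs fun j ↦ by
      simpa only [pow_succ', mul_assoc] using hapos j
    simp only [littleqJacobiNormSq, qPoch_zero, pow_zero, mul_zero, zero_add, pow_one, mul_one,
      div_one, div_self (sub_ne_zero.mpr hab.symm)]
    exact div_pos hnum hden
  | succ n ih =>
    refine pos_of_mul_pos_right ?_ (littleqJacobiConnDiag_pos hq hq1.le ha ha1 hb hab n).le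
    rw [littleqJacobiConn_balance (fun k ↦ (hapos k).ne') habne]
    exact mul_pos (littleqJacobiConnSub_succ_pos hq hq1 ha ha1 hb n) ih

end Norm

section Orthonormal

variable {q a b c : ℝ}

/-- The orthonormal little q-Jacobi polynomial `φ_n`. -/
noncomputable def littleqJacobiOrthonormal (q a b : ℝ) (n : ℕ) : ℝ → ℝ :=
  (√(littleqJacobiNormSq q a b n))⁻¹ • littleqJacobi q a b n

/-- The diagonal entry `b_n^γ` of `T^γ`, in terms of the connection coefficients. -/
noncomputable def littleqJacobiTDiag (q a b c : ℝ) (n : ℕ) : ℝ :=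
  littleqJacobiConnDiag q a b n * littleqJacobiTFactor q a b c (n + 1)
    + littleqJacobiConnSub q a b n * littleqJacobiTFactor q a b c n

/-- The off-diagonal entry `a_n^γ` of `T^γ`, in terms of the connection coefficients. -/
noncomputable def littleqJacobiTOffDiag (q a b c : ℝ) (n : ℕ) : ℝ :=
  -(littleqJacobiTFactor q a b c (n + 1)
    * √(littleqJacobiConnDiag q a b n * littleqJacobiConnSub q a b (n + 1)))

lemma littleqJacobiTDiag_eq (q a b c : ℝ) (n : ℕ) :
    littleqJacobiTDiag q a b c n
      = (1 - a * c * q ^ (n + 1)) * (1 - a * q ^ (n + 1)) * (1 - a * b * q ^ (n + 1))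
          * (1 - b * q ^ (n + 1) / c)
          / ((1 - a * b * q ^ (2 * n + 1)) * (1 - a * b * q ^ (2 * n + 2)))
        + a * q * (1 - q ^ n) * (1 - a * c * q ^ n) * (1 - b * q ^ n) * (1 - b * q ^ n / c)
          / ((1 - a * b * q ^ (2 * n)) * (1 - a * b * q ^ (2 * n + 1))) := by
  simp only [littleqJacobiTDiag, littleqJacobiConnDiag, littleqJacobiConnSub,
    littleqJacobiTFactor, div_mul_div_comm, mul_add_one]
  ring

lemma littleqJacobiTOffDiag_eq (haq : 0 ≤ a * q) (n : ℕ) :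
    littleqJacobiTOffDiag q a b c n
      = -(√(a * q) * (1 - a * c * q ^ (n + 1)) * (1 - b * q ^ (n + 1) / c)
          / (1 - a * b * q ^ (2 * n + 2)))
        * √((1 - q ^ (n + 1)) * (1 - a * q ^ (n + 1)) * (1 - b * q ^ (n + 1))
            * (1 - a * b * q ^ (n + 1))
            / ((1 - a * b * q ^ (2 * n + 1)) * (1 - a * b * q ^ (2 * n + 3)))) := by
  have hprod : littleqJacobiConnDiag q a b n * littleqJacobiConnSub q a b (n + 1)
      = a * q * ((1 - q ^ (n + 1)) * (1 - a * q ^ (n + 1)) * (1 - b * q ^ (n + 1))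
          * (1 - a * b * q ^ (n + 1))
          / ((1 - a * b * q ^ (2 * n + 1)) * (1 - a * b * q ^ (2 * n + 3)))) := by
    simp only [littleqJacobiConnDiag, littleqJacobiConnSub, div_mul_div_comm]
    ring
  rw [littleqJacobiTOffDiag, hprod, Real.sqrt_mul haq, littleqJacobiTFactor]
  ring

lemma sqrt_mul_mul_inv_sqrt {r s u v : ℝ} (hr : 0 ≤ r) (hu : 0 < u) (hv : 0 < v)
    (h : r * v = s * u) : √(r * s) * (√v)⁻¹ = r * (√u)⁻¹ := by
  have hsq : √(r * s) * √u = r * √v := by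
    rw [← Real.sqrt_mul' _ hu.le, mul_assoc, ← h, ← mul_assoc, Real.sqrt_mul' _ hv.le,
      Real.sqrt_mul_self hr]
  have hu' := (Real.sqrt_pos.mpr hu).ne'
  have hv' := (Real.sqrt_pos.mpr hv).ne'
  field_simp
  exact hsq

theorem littleqJacobiT_orthonormal (hq : 0 < q) (hq1 : q < 1) (ha : 0 < a) (ha1 : a * q < 1)
    (hb : b * q < 1) (hab : a * b * q ≠ 1) (hc : c ≠ 0) (n : ℕ) {x : ℝ} (hx : x ≠ 0) :
    littleqJacobiT q a b (littleqJacobiGamma q a b c) (littleqJacobiOrthonormal q a b n) x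
      = littleqJacobiTOffDiag q a b c n * littleqJacobiOrthonormal q a b (n + 1) x
        + littleqJacobiTDiag q a b c n * littleqJacobiOrthonormal q a b n x
        + (if n = 0 then 0
          else
            littleqJacobiTOffDiag q a b c (n - 1) * littleqJacobiOrthonormal q a b (n - 1) x) := by
  have hqne (k : ℕ) : 1 - q ^ (k + 1) ≠ 0 :=
    (sub_pos.mpr (pow_lt_one₀ hq.le hq1 k.succ_ne_zero)).ne'
  have hane (k : ℕ) := (one_sub_mul_pow_succ_pos hq.le hq1.le ha1 k).ne'
  have habne := one_sub_mul_mul_pow_succ_ne_zero hq hq1.le ha ha1 hb hab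
  have hnorm := littleqJacobiNormSq_pos hq hq1 ha ha1 hb hab
  have hG (m : ℕ) := (littleqJacobiConnDiag_pos hq hq1.le ha ha1 hb hab m).le
  have hH (m : ℕ) := (littleqJacobiConnSub_succ_pos hq hq1 ha ha1 hb m).le
  have hbal := littleqJacobiConn_balance hane habne
  have hup := sqrt_mul_mul_inv_sqrt (hG n) (hnorm n) (hnorm (n + 1)) (hbal n)
  simp only [littleqJacobiOrthonormal, map_smul, Pi.smul_apply, smul_eq_mul,
    littleqJacobiT_littleqJacobi hq.ne' hqne hane habne hc n hx, littleqJacobiTOffDiag,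
    littleqJacobiTDiag]
  cases n with
  | zero =>
    rw [if_pos rfl, littleqJacobiConnSub_zero]
    linear_combination littleqJacobiTFactor q a b c 1 * littleqJacobi q a b 1 x * hup
  | succ n =>
    have hdown := sqrt_mul_mul_inv_sqrt (hH n) (hnorm (n + 1)) (hnorm n) (hbal n).symm
    rw [mul_comm (littleqJacobiConnSub q a b (n + 1))] at hdown
    rw [if_neg n.succ_ne_zero, Nat.add_sub_cancel]
    linear_combination
      littleqJacobiTFactor q a b c (n + 2) * littleqJacobi q a b (n + 2) x * hup
        + littleqJacobiTFactor q a b c (n + 1) * littleqJacobi q a b n x * hdown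

end Orthonormal

/-- Case one (shift in `a`): the bounded q-difference operator
`T^γ = x(L^{(aq,b)} + γ)`, `γ = (1+abq²) − (acq + bq/c)`, acts tridiagonally on the
orthonormalised little q-Jacobi polynomials `φ_n = p_n(·;a,b;q)/√(h_n)`. -/
theorem stmt_7 (q a b c : ℝ) (hq : 0 < q) (hq1 : q < 1)
    (ha0 : 0 < a) (ha1 : a < q⁻¹) (hb : b < q⁻¹) (hc : c ≠ 0)
    (γ : ℝ) (hγ : γ = (1 + a * b * q ^ 2) - (a * c * q + b * q / c))
    (h : ℕ → ℝ)
    (hh : ∀ n, h n = qPochInf q (a * b * q ^ 2) / qPochInf q (a * q)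
        * ((1 - a * b * q) * (a * q) ^ n / (1 - a * b * q ^ (2 * n + 1)))
        * (qPoch q q n * qPoch q (b * q) n)
        / (qPoch q (a * q) n * qPoch q (a * b * q) n))
    (φ : ℕ → ℝ → ℝ)
    (hφ : ∀ n x, φ n x = littleqJacobi q a b n x / Real.sqrt (h n))
    (A B : ℕ → ℝ)
    (hA : ∀ n : ℕ, A n =
      -(Real.sqrt (a * q) * (1 - a * c * q ^ (n + 1)) * (1 - b * q ^ (n + 1) / c)
          / (1 - a * b * q ^ (2 * n + 2)))
        * Real.sqrt ((1 - q ^ (n + 1)) * (1 - a * q ^ (n + 1)) * (1 - b * q ^ (n + 1))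
            * (1 - a * b * q ^ (n + 1))
            / ((1 - a * b * q ^ (2 * n + 1)) * (1 - a * b * q ^ (2 * n + 3)))))
    (hB : ∀ n : ℕ, B n =
      (1 - a * c * q ^ (n + 1)) * (1 - a * q ^ (n + 1)) * (1 - a * b * q ^ (n + 1))
          * (1 - b * q ^ (n + 1) / c)
          / ((1 - a * b * q ^ (2 * n + 1)) * (1 - a * b * q ^ (2 * n + 2)))
        + a * q * (1 - q ^ n) * (1 - a * c * q ^ n) * (1 - b * q ^ n) * (1 - b * q ^ n / c)
          / ((1 - a * b * q ^ (2 * n)) * (1 - a * b * q ^ (2 * n + 1)))) :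
    ∀ (n : ℕ) (x : ℝ), x ≠ 0 →
      a * q * (b * q * x - 1) * (φ n (q * x) - φ n x)
        + (x - 1) * (φ n (x / q) - φ n x) + γ * x * φ n x
      = A n * φ (n + 1) x + B n * φ n x
        + (if n = 0 then 0 else A (n - 1) * φ (n - 1) x) := by
  intro n x hx
  by_cases hab : a * b * q = 1
  · -- At `abq = 1` the formula gives `h = 0`, and division by zero makes every `φ n` vanish.
    have hφ0 (m : ℕ) (y : ℝ) : φ m y = 0 := by
      rw [hφ, hh, hab, sub_self, zero_mul, zero_div, mul_zero, zero_mul, zero_div, Real.sqrt_zero,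
        div_zero]
    simp only [hφ0, sub_self, mul_zero, add_zero, ite_self]
  have hφ' (m : ℕ) : φ m = littleqJacobiOrthonormal q a b m := by
    ext y
    rw [hφ, hh, div_eq_inv_mul]
    rfl
  have hA' (m : ℕ) : A m = littleqJacobiTOffDiag q a b c m :=
    (hA m).trans (littleqJacobiTOffDiag_eq (mul_pos ha0 hq).le m).symm
  have hB' : B n = littleqJacobiTDiag q a b c n :=
    (hB n).trans (littleqJacobiTDiag_eq q a b c n).symm
  have haq : a * q < 1 := (lt_mul_inv_iff₀ hq).mp (by rwa [one_mul])
  have hbq : b * q < 1 := (lt_mul_inv_iff₀ hq).mp (by rwa [one_mul])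
  have hT := littleqJacobiT_orthonormal hq hq1 ha0 haq hbq hab hc n hx
  simp only [← hφ', ← hA', ← hB'] at hT
  rw [← hT, littleqJacobiT_apply, littleqJacobiOp_apply, hγ, littleqJacobiGamma]
  field_simp
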